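/- Let p ∈ [1,∞), let ρ : ℝ^N → ℝ be continuous and strictly positive with ∫_{ℝ^N} ρ(x) dx = 1, suppose K > 0 satisfies sup{ρ(x) : |x−y| ≤ 1} ≤ K ρ(y) for every y ∈ ℝ^N, and let β > 0. Let J ∈ C¹(ℝ^N) be nonnegative, even, supported in the closed unit ball with ∫ J = 1; let g ∈ C¹(ℝ) satisfy g(0) = 0, |g(s)| ≤ a for all s, g globally Lipschitz, and g' globally Lipschitz. For each ε ∈ [0,1] let h_ε : ℝ → [0,h*) be continuous, and assume h_ε → h_0 uniformly on ℝ as ε → 0⁺. Let S_ε(t,τ) denote the solution process of u(t) = e^{−(t−τ)}u_τ + ∫_τ^t e^{−(t−s)} g(β(J*u(s)) + β h_ε(s)) ds in L^p(ℝ^N,ρ), and let A_ε(t) := ⋂_{s ≤ t} closure(⋃_{τ ≤ s} S_ε(t,τ)B(0,a+1)) be the corresponding pullback attractor sections. Then for every t ∈ ℝ, lim_{ε→0⁺} sup_{x ∈ A_ε(t)} dist(x, A_0(t)) = 0, i.e. the pullback attractors are upper semicontinuous at ε = 0. -/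

import Mathlib

open MeasureTheory Set
open scoped ENNReal

noncomputable section

abbrev Euc (N : ℕ) := EuclideanSpace ℝ (Fin N)

/-- Weighted `L^p` norm `(∫ ρ |u|^p)^{1/p}`. -/
def wnorm {N : ℕ} (p : ℝ) (ρ u : Euc N → ℝ) : ℝ :=
  (∫ x, ρ x * |u x| ^ p) ^ (1 / p)

/-- Convolution `(J*u)(x) = ∫ J(x-y) u(y) dy`. -/
def conv {N : ℕ} (J u : Euc N → ℝ) (x : Euc N) : ℝ :=
  ∫ y, J (x - y) * u y

/-- Membership in the weighted Lebesgue space `L^p(ℝ^N, ρ)`. -/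
def MemWLp {N : ℕ} (p : ℝ) (ρ u : Euc N → ℝ) : Prop :=
  AEStronglyMeasurable u volume ∧ Integrable fun x => ρ x * |u x| ^ p

/-- `u` satisfies the variation-of-constants identity on `[τ, ∞)` with initial datum `uτ`. -/
def IsSolution {N : ℕ} (J : Euc N → ℝ) (g : ℝ → ℝ) (h : ℝ → ℝ → ℝ) (β τ : ℝ)
    (uτ : Euc N → ℝ) (u : ℝ → Euc N → ℝ) : Prop :=
  ∀ t ≥ τ, ∀ x, u t x = Real.exp (-(t - τ)) * uτ x +
    ∫ s in τ..t, Real.exp (-(t - s)) * g (β * conv J (u s) x + β * h s (u s x))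

/-- The weighted measure `ρ(x) dx` on `ℝ^N`. -/
def wMeasure {N : ℕ} (ρ : Euc N → ℝ) : Measure (Euc N) :=
  volume.withDensity fun x => ENNReal.ofReal (ρ x)

/-- The image at time `t` under the process of the closed ball of radius `r`
taken at initial time `τ`, i.e. `S(t,τ) B(0,r)`, as a subset of `L^p(ℝ^N,ρ)`. -/
def procSet {N : ℕ} (p : ℝ≥0∞) (ρ J : Euc N → ℝ) (g : ℝ → ℝ) (h : ℝ → ℝ)
    (β r t τ : ℝ) : Set (Lp ℝ p (wMeasure ρ)) :=
  {w | ∃ (u : ℝ → Euc N → ℝ) (uτ : Euc N → ℝ),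
      MemWLp p.toReal ρ uτ ∧ wnorm p.toReal ρ uτ ≤ r ∧
      (∀ t' ≥ τ, MemWLp p.toReal ρ (u t')) ∧
      IsSolution J g (fun s _ => h s) β τ uτ u ∧
      ⇑w =ᵐ[wMeasure ρ] u t}

/-- The pullback omega-limit set `A(t) = ⋂_{s ≤ t} closure (⋃_{τ ≤ s} S(t,τ) B(0,r))`. -/
def attrSet {N : ℕ} (p : ℝ≥0∞) [Fact (1 ≤ p)] (ρ J : Euc N → ℝ) (g : ℝ → ℝ) (h : ℝ → ℝ)
    (β r t : ℝ) : Set (Lp ℝ p (wMeasure ρ)) :=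
  ⋂ s ∈ Iic t, closure (⋃ τ ∈ Iic s, procSet p ρ J g h β r t τ)

open Filter Topology

theorem aux_kernel {N : ℕ} (k w : Euc N → ℝ) (x : Euc N) (R η : ℝ) (hk : Continuous k)
    (hkη : ∀ y, |k y| ≤ η) (hk0 : ∀ y, y ∉ Metric.closedBall x R → k y = 0)
    (hw : IntegrableOn w (Metric.closedBall x R)) :
    Integrable (fun y => k y * w y) ∧
      |∫ y, k y * w y| ≤ η * ∫ y in Metric.closedBall x R, |w y| := by
  have hsupp : Function.support (fun y => k y * w y) ⊆ Metric.closedBall x R := by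
    intro y hy
    by_contra hc
    exact hy (by simp [hk0 y hc])
  have h1 : IntegrableOn (fun y => k y * w y) (Metric.closedBall x R) := by
    refine Integrable.bdd_mul (c := η) hw hk.aestronglyMeasurable ?_
    exact Eventually.of_forall fun y => by simpa using hkη y
  have h2 : ∫ y, k y * w y = ∫ y in Metric.closedBall x R, k y * w y :=
    (setIntegral_eq_integral_of_forall_compl_eq_zero (fun y hy => by simp [hk0 y hy])).symm
  refine ⟨(integrableOn_iff_integrable_of_support_subset hsupp).1 h1, ?_⟩
  rw [h2, ← integral_const_mul]
  refine (abs_integral_le_integral_abs).trans ?_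
  refine integral_mono h1.abs (hw.abs.const_mul η) ?_
  intro y
  simp only [abs_mul]
  exact mul_le_mul_of_nonneg_right (hkη y) (abs_nonneg _)

theorem aux_loc {N : ℕ} (q : ℝ) (hq : 1 ≤ q) (ρ : Euc N → ℝ) (hρc : Continuous ρ)
    (hρpos : ∀ x, 0 < ρ x) (x : Euc N) (R : ℝ) :
    ∃ m > 0, ∀ u, MemWLp q ρ u → IntegrableOn u (Metric.closedBall x R) ∧
      ∫ y in Metric.closedBall x R, |u y| ≤
        (∫ y in Metric.closedBall x R, (1:ℝ)) + m * ∫ y, ρ y * |u y| ^ q := by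
  obtain ⟨m, hm, hmin⟩ : ∃ m > 0, ∀ y ∈ Metric.closedBall x R, m ≤ ρ y := by
    by_cases hR : 0 ≤ R
    · obtain ⟨z, hz, hzm⟩ := (isCompact_closedBall x R).exists_isMinOn
        ⟨x, Metric.mem_closedBall_self hR⟩ hρc.continuousOn
      exact ⟨ρ z, hρpos z, fun y hy => hzm hy⟩
    · refine ⟨1, one_pos, fun y hy => ?_⟩
      rw [Metric.closedBall_eq_empty.2 (not_le.1 hR)] at hy
      exact hy.elim
  refine ⟨m⁻¹, inv_pos.2 hm, fun u hu => ?_⟩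
  have hpt : ∀ y ∈ Metric.closedBall x R, |u y| ≤ 1 + m⁻¹ * (ρ y * |u y| ^ q) := by
    intro y hy
    have h1 : |u y| ≤ 1 + |u y| ^ q := by
      rcases le_total (|u y|) 1 with h | h
      · have : 0 ≤ |u y| ^ q := by positivity
        linarith
      · have := Real.rpow_le_rpow_of_exponent_le h hq
        rw [Real.rpow_one] at this
        linarith
    have h2 : |u y| ^ q ≤ m⁻¹ * (ρ y * |u y| ^ q) := by
      rw [← mul_assoc]
      refine le_mul_of_one_le_left (by positivity) ?_
      rw [inv_mul_eq_div, one_le_div hm]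
      exact hmin y hy
    linarith
  have hfin : volume (Metric.closedBall x R) ≠ ⊤ := measure_closedBall_lt_top.ne
  have hone : IntegrableOn (fun _ : Euc N => (1:ℝ)) (Metric.closedBall x R) :=
    integrableOn_const hfin
  have hi2 : IntegrableOn (fun y => m⁻¹ * (ρ y * |u y| ^ q)) (Metric.closedBall x R) :=
    (hu.2.const_mul _).integrableOn
  have hbd := hone.add hi2
  have hae : ∀ᵐ y ∂(volume.restrict (Metric.closedBall x R)),
      |u y| ≤ 1 + m⁻¹ * (ρ y * |u y| ^ q) :=
    (ae_restrict_iff' measurableSet_closedBall).2 (Eventually.of_forall hpt)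
  have hI : IntegrableOn u (Metric.closedBall x R) :=
    Integrable.mono' hbd hu.1.restrict (by simpa using hae)
  refine ⟨hI, ?_⟩
  calc ∫ y in Metric.closedBall x R, |u y|
      ≤ ∫ y in Metric.closedBall x R, (1 + m⁻¹ * (ρ y * |u y| ^ q)) :=
        integral_mono_ae hI.abs hbd hae
    _ = (∫ y in Metric.closedBall x R, (1:ℝ)) +
          ∫ y in Metric.closedBall x R, m⁻¹ * (ρ y * |u y| ^ q) := integral_add hone hi2
    _ ≤ _ := by
        gcongr
        rw [integral_const_mul]
        gcongr
        · refine Eventually.of_forall fun y => ?_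
          have := (hρpos y).le
          simp only [Pi.zero_apply]
          positivity
        · exact hu.2
        · exact Measure.restrict_le_self

theorem aux_wnorm {N : ℕ} (q : ℝ) (hq : 1 ≤ q) (ρ : Euc N → ℝ)
    (hρpos : ∀ x, 0 < ρ x) (r : ℝ) (hr : 0 ≤ r) (u : Euc N → ℝ) :
    wnorm q ρ u ≤ r ↔ ∫ y, ρ y * |u y| ^ q ≤ r ^ q := by
  have h0 : 0 ≤ ∫ y, ρ y * |u y| ^ q := integral_nonneg fun y => by
    have := (hρpos y).le
    simp only [Pi.zero_apply]
    positivity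
  unfold wnorm
  rw [one_div]
  exact Real.rpow_inv_le_iff_of_pos h0 hr (by linarith)

theorem aux_leftmeas (f : ℝ → ℝ) (τ : ℝ)
    (hf : ∀ s > τ, Tendsto f (𝓝[<] s) (𝓝 (f s))) :
    Measurable (indicator (Ioi τ) f) := by
  set F := indicator (Ioi τ) f with hF
  let S : ℕ → ℝ → ℝ := fun n s => ((⌈((n:ℝ)+1) * s⌉ : ℤ) - 1 : ℝ) / ((n:ℝ)+1)
  have hSlt : ∀ (n : ℕ) (s : ℝ), S n s < s := by
    intro n s
    have hn : (0:ℝ) < (n:ℝ)+1 := by positivity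
    simp only [S]
    rw [div_lt_iff₀ hn]
    have := Int.ceil_lt_add_one (((n:ℝ)+1) * s)
    linarith
  have hSge : ∀ (n : ℕ) (s : ℝ), s - 1 / ((n:ℝ)+1) ≤ S n s := by
    intro n s
    have hn : (0:ℝ) < (n:ℝ)+1 := by positivity
    simp only [S]
    rw [le_div_iff₀ hn, sub_mul, one_div, inv_mul_cancel₀ hn.ne']
    have := Int.le_ceil (((n:ℝ)+1) * s)
    linarith
  have hSt : ∀ s, Tendsto (fun n => S n s) atTop (𝓝[<] s) := by
    intro s
    refine tendsto_nhdsWithin_iff.2 ⟨?_, Eventually.of_forall fun n => hSlt n s⟩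
    refine tendsto_of_tendsto_of_tendsto_of_le_of_le ?_ tendsto_const_nhds
      (fun n => hSge n s) (fun n => (hSlt n s).le)
    simpa using tendsto_const_nhds.sub (tendsto_one_div_add_atTop_nhds_zero_nat (𝕜 := ℝ)) (a := s)
  refine measurable_of_tendsto_metrizable (f := fun n s => F (S n s)) ?_ ?_
  · intro n
    have : (fun s => F (S n s)) =
        (fun z : ℤ => F (((z:ℝ) - 1) / ((n:ℝ)+1))) ∘ (fun s : ℝ => ⌈((n:ℝ)+1) * s⌉) := rfl
    rw [this]
    exact (measurable_from_top).comp (Int.measurable_ceil.comp (measurable_const_mul _))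
  · rw [tendsto_pi_nhds]
    intro s
    by_cases hs : τ < s
    · have hFs : F s = f s := indicator_of_mem hs f
      rw [hFs]
      refine Tendsto.congr' ?_ ((hf s hs).comp (hSt s))
      have h1 : ∀ᶠ n in atTop, S n s ∈ Ioi τ :=
        (hSt s).eventually (mem_nhdsWithin_of_mem_nhds (Ioi_mem_nhds hs))
      filter_upwards [h1] with n hn
      exact (indicator_of_mem hn f).symm
    · have : ∀ n, F (S n s) = F s := by
        intro n
        have h1 : F s = 0 := indicator_of_notMem hs f
        rw [h1]
        refine indicator_of_notMem ?_ f
        have := hSlt n s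
        simp only [mem_Ioi, not_lt] at hs ⊢
        linarith
      simp [this]

/-- left continuity of primitives, junk values included -/
theorem aux_leftcont (G : ℝ → ℝ) (C : ℝ → ℝ) (hC : Continuous C) (τ : ℝ)
    (hG : ∀ s, |G s| ≤ C s) (s : ℝ) (hs : τ < s) :
    Tendsto (fun s' => ∫ r in τ..s', G r) (𝓝[<] s) (𝓝 (∫ r in τ..s, G r)) := by
  by_cases hi : IntervalIntegrable G volume τ s
  · have h1 := intervalIntegral.continuousOn_primitive_interval (μ := volume) (f := G)
      (a := τ) (b := s) (by
        rw [uIcc_of_le hs.le, integrableOn_Icc_iff_integrableOn_Ioc]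
        exact (intervalIntegrable_iff_integrableOn_Ioc_of_le hs.le).1 hi)
    have h2 := (h1 s right_mem_uIcc).tendsto
    refine h2.mono_left ?_
    rw [uIcc_of_le hs.le]
    rw [← nhdsWithin_Ioo_eq_nhdsLT hs]
    exact nhdsWithin_mono _ Ioo_subset_Icc_self
  · have hex : ∃ s' < s, τ < s' ∧ ¬ IntervalIntegrable G volume τ s' := by
      by_contra! hcon
      apply hi
      have hm : AEStronglyMeasurable G (volume.restrict (Ioo τ s)) := by
        obtain ⟨v, hv, hv1, hv2⟩ := exists_seq_strictMono_tendsto' hs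
        have : Ioo τ s ⊆ ⋃ n, Ioc τ (v n) := by
          intro y hy
          obtain ⟨n, hn⟩ := (hv2.eventually (lt_mem_nhds hy.2)).exists
          exact mem_iUnion.2 ⟨n, hy.1, hn.le⟩
        refine AEStronglyMeasurable.mono_set this ?_
        rw [aestronglyMeasurable_iUnion_iff]
        intro n
        exact ((intervalIntegrable_iff_integrableOn_Ioc_of_le (hv1 n).1.le).1
          (hcon _ (hv1 n).2 (hv1 n).1)).aestronglyMeasurable
      rw [intervalIntegrable_iff_integrableOn_Ioo_of_le hs.le]
      have hCi : IntegrableOn C (Ioo τ s) :=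
        (hC.continuousOn.integrableOn_Icc (a := τ) (b := s)).mono_set Ioo_subset_Icc_self
      exact Integrable.mono' hCi hm (Eventually.of_forall fun y => by simpa using hG y)
    obtain ⟨s', hs', hτ, hni⟩ := hex
    rw [intervalIntegral.integral_undef hi]
    refine Tendsto.congr' ?_ tendsto_const_nhds
    filter_upwards [Ioo_mem_nhdsLT hs'] with y hy
    rw [intervalIntegral.integral_undef]
    intro hc
    exact hni (hc.mono_set (by
      rw [uIcc_of_le hτ.le, uIcc_of_le (hτ.trans hy.1).le]
      exact Icc_subset_Icc_right hy.1.le))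

def nonlin {N : ℕ} (J : Euc N → ℝ) (g h : ℝ → ℝ) (β : ℝ) (u : ℝ → Euc N → ℝ) (x : Euc N)
    (r : ℝ) : ℝ := g (β * conv J (u r) x + β * h r)

def vpart {N : ℕ} (J : Euc N → ℝ) (g h : ℝ → ℝ) (β τ : ℝ) (u : ℝ → Euc N → ℝ) (s : ℝ)
    (x : Euc N) : ℝ := ∫ r in τ..s, Real.exp (-(s - r)) * nonlin J g h β u x r

theorem aux_expint (s τ : ℝ) :
    ∫ r in τ..s, Real.exp (-(s - r)) = 1 - Real.exp (-(s - τ)) := by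
  have : ∀ r ∈ uIcc τ s, HasDerivAt (fun r => Real.exp (-(s - r))) (Real.exp (-(s - r))) r := by
    intro r _
    have h1 : HasDerivAt (fun r : ℝ => -(s - r)) 1 r := by
      simpa using hasDerivAt_id' r
    simpa using h1.exp
  rw [intervalIntegral.integral_eq_sub_of_hasDerivAt this
    (Continuous.intervalIntegrable (by fun_prop) _ _)]
  simp

theorem aux_decay (G : ℝ → ℝ) (a s τ : ℝ) (hs : τ ≤ s) (hG : ∀ r ∈ Ioc τ s, |G r| ≤ a) :
    |∫ r in τ..s, Real.exp (-(s - r)) * G r| ≤ (1 - Real.exp (-(s - τ))) * a := by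
  have := intervalIntegral.norm_integral_le_of_norm_le (μ := volume)
    (f := fun r => Real.exp (-(s - r)) * G r)
    (g := fun r => Real.exp (-(s - r)) * a) hs (Eventually.of_forall fun r hr => by
      simp only [norm_mul, Real.norm_eq_abs, Real.abs_exp]
      exact mul_le_mul_of_nonneg_left (hG r hr) (Real.exp_pos _).le)
    (Continuous.intervalIntegrable (by fun_prop) _ _)
  rwa [intervalIntegral.integral_mul_const, aux_expint] at this

theorem aux_bound {N : ℕ} (J : Euc N → ℝ) (g h : ℝ → ℝ) (β τ a : ℝ)
    (hga : ∀ s, |g s| ≤ a) (u : ℝ → Euc N → ℝ) (s : ℝ) (hs : τ ≤ s) (x : Euc N) :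
    |vpart J g h β τ u s x| ≤ a := by
  have ha : 0 ≤ a := (abs_nonneg _).trans (hga 0)
  refine (aux_decay _ a s τ hs fun r _ => hga _).trans ?_
  have := Real.exp_pos (-(s - τ))
  nlinarith

theorem aux_meas {N : ℕ} (q : ℝ) (hq : 1 ≤ q)
    (ρ : Euc N → ℝ) (hρc : Continuous ρ) (hρpos : ∀ x, 0 < ρ x)
    (J : Euc N → ℝ) (hJc : Continuous J) (CJ : ℝ) (hCJ : ∀ x, |J x| ≤ CJ)
    (hJsupp : ∀ x : Euc N, 1 < ‖x‖ → J x = 0)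
    (g : ℝ → ℝ) (a : ℝ) (hga : ∀ s, |g s| ≤ a)
    (h : ℝ → ℝ) (β τ : ℝ)
    (uτ : Euc N → ℝ) (u : ℝ → Euc N → ℝ) (huτ : MemWLp q ρ uτ)
    (hu : ∀ t' ≥ τ, MemWLp q ρ (u t')) (hsol : IsSolution J g (fun s _ => h s) β τ uτ u)
    (x : Euc N) : Measurable (indicator (Ioi τ) fun s => conv J (u s) x) := by
  have hsol' : ∀ t ≥ τ, ∀ x, u t x = Real.exp (-(t - τ)) * uτ x + vpart J g h β τ u t x := hsol
  have ha : 0 ≤ a := (abs_nonneg _).trans (hga 0)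
  apply aux_leftmeas
  intro s hs
  unfold conv
  have hk0 : ∀ y, y ∉ Metric.closedBall x 1 → J (x - y) = 0 := by
    intro y hy
    apply hJsupp
    rw [Metric.mem_closedBall, not_le, dist_comm, dist_eq_norm] at hy
    exact hy
  have hkc : Continuous fun y => J (x - y) := by fun_prop
  obtain ⟨m, hm, hloc⟩ := aux_loc q hq ρ hρc hρpos x 1
  have hbd : IntegrableOn (fun y => |uτ y| + a) (Metric.closedBall x 1) :=
    (hloc uτ huτ).1.abs.add (integrableOn_const measure_closedBall_lt_top.ne)
  have hker := (aux_kernel (fun y => |J (x - y)|) (fun y => |uτ y| + a) x 1 CJ hkc.abs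
    (fun y => by simpa using hCJ _) (fun y hy => by simp [hk0 y hy]) hbd).1
  refine tendsto_integral_filter_of_dominated_convergence _ ?_ ?_ hker ?_
  · filter_upwards [Ioo_mem_nhdsLT hs] with s' hs'
    exact hkc.aestronglyMeasurable.mul (hu s' hs'.1.le).1
  · filter_upwards [Ioo_mem_nhdsLT hs] with s' hs'
    refine Eventually.of_forall fun y => ?_
    rw [norm_mul, Real.norm_eq_abs, Real.norm_eq_abs]
    refine mul_le_mul_of_nonneg_left ?_ (abs_nonneg _)
    rw [hsol' s' hs'.1.le y]
    refine (abs_add_le _ _).trans (add_le_add ?_ (aux_bound J g h β τ a hga u s' hs'.1.le y))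
    rw [abs_mul, Real.abs_exp]
    refine mul_le_of_le_one_left (abs_nonneg _) ?_
    rw [Real.exp_le_one_iff]
    linarith [hs'.1]
  · refine Eventually.of_forall fun y => ?_
    refine tendsto_const_nhds.mul ?_
    have hv : ∀ s', vpart J g h β τ u s' y =
        Real.exp (-s') * ∫ r in τ..s', Real.exp r * nonlin J g h β u y r := by
      intro s'
      unfold vpart
      rw [← intervalIntegral.integral_const_mul]
      congr 1
      ext r
      rw [← mul_assoc, ← Real.exp_add]
      congr 2
      ring
    have h1 : Tendsto (fun s' => Real.exp (-(s' - τ)) * uτ y + Real.exp (-s') *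
        ∫ r in τ..s', Real.exp r * nonlin J g h β u y r) (𝓝[<] s)
        (𝓝 (Real.exp (-(s - τ)) * uτ y + Real.exp (-s) *
        ∫ r in τ..s, Real.exp r * nonlin J g h β u y r)) := by
      refine Tendsto.add ?_ (Tendsto.mul ?_ ?_)
      · exact (Continuous.tendsto (by fun_prop) s).mono_left nhdsWithin_le_nhds
      · exact (Continuous.tendsto (by fun_prop) s).mono_left nhdsWithin_le_nhds
      · refine aux_leftcont _ (fun r => Real.exp r * a) (by fun_prop) τ ?_ s hs
        intro r
        rw [abs_mul, Real.abs_exp]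
        exact mul_le_mul_of_nonneg_left (hga _) (Real.exp_pos _).le
    rw [hsol' s hs.le y, hv]
    refine h1.congr' ?_
    filter_upwards [Ioo_mem_nhdsLT hs] with s' hs'
    rw [hsol' s' hs'.1.le y, hv]

theorem aux_ii {N : ℕ} 
    (J : Euc N → ℝ) (g : ℝ → ℝ) (hgc : Continuous g) (a : ℝ) (hga : ∀ s, |g s| ≤ a)
    (h : ℝ → ℝ) (hh : Continuous h) (β τ : ℝ) (u : ℝ → Euc N → ℝ) (x : Euc N)
    (hm : Measurable (indicator (Ioi τ) fun s => conv J (u s) x))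
    (s s1 s2 : ℝ) (h1 : τ ≤ s1) (h2 : s1 ≤ s2) :
    IntervalIntegrable (fun r => Real.exp (-(s - r)) * nonlin J g h β u x r) volume s1 s2 := by
  rw [intervalIntegrable_iff_integrableOn_Ioc_of_le h2]
  have hb : IntegrableOn (fun r => Real.exp (-(s - r)) * a) (Ioc s1 s2) :=
    (Continuous.integrableOn_Icc (by fun_prop)).mono_set Ioc_subset_Icc_self
  refine Integrable.mono' hb ?_ ?_
  · have hM : Measurable fun r => Real.exp (-(s - r)) *
        g (β * indicator (Ioi τ) (fun s => conv J (u s) x) r + β * h r) := by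
      refine Measurable.mul (by fun_prop) (hgc.measurable.comp ?_)
      exact (hm.const_mul β).add (hh.measurable.const_mul β)
    refine hM.aestronglyMeasurable.congr ?_
    refine (ae_restrict_iff' measurableSet_Ioc).2 (Eventually.of_forall fun r hr => ?_)
    simp only [nonlin]
    rw [indicator_of_mem]
    exact lt_of_le_of_lt h1 hr.1
  · refine Eventually.of_forall fun r => ?_
    rw [norm_mul, Real.norm_eq_abs, Real.norm_eq_abs, Real.abs_exp]
    exact mul_le_mul_of_nonneg_left (hga _) (Real.exp_pos _).le

theorem aux_cocycle {N : ℕ} 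
    (J : Euc N → ℝ) (g : ℝ → ℝ) (hgc : Continuous g) (a : ℝ) (hga : ∀ s, |g s| ≤ a)
    (h : ℝ → ℝ) (hh : Continuous h) (β τ : ℝ) (u : ℝ → Euc N → ℝ) (x : Euc N)
    (hm : Measurable (indicator (Ioi τ) fun s => conv J (u s) x))
    (s1 s2 : ℝ) (h1 : τ ≤ s1) (h2 : s1 ≤ s2) :
    vpart J g h β τ u s2 x = Real.exp (-(s2 - s1)) * vpart J g h β τ u s1 x +
      ∫ r in s1..s2, Real.exp (-(s2 - r)) * nonlin J g h β u x r := by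
  have hii := aux_ii J g hgc a hga h hh β τ u x hm s2
  unfold vpart
  rw [← intervalIntegral.integral_add_adjacent_intervals (hii τ s1 le_rfl h1) (hii s1 s2 h1 h2),
    ← intervalIntegral.integral_const_mul]
  congr 2
  ext r
  rw [← mul_assoc, ← Real.exp_add]
  congr 2
  ring

theorem aux_tlip {N : ℕ} 
    (J : Euc N → ℝ) (g : ℝ → ℝ) (hgc : Continuous g) (a : ℝ) (hga : ∀ s, |g s| ≤ a)
    (h : ℝ → ℝ) (hh : Continuous h) (β τ : ℝ) (u : ℝ → Euc N → ℝ) (x : Euc N)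
    (hm : Measurable (indicator (Ioi τ) fun s => conv J (u s) x))
    (s1 s2 : ℝ) (h1 : τ ≤ s1) (h2 : s1 ≤ s2) :
    |vpart J g h β τ u s2 x - vpart J g h β τ u s1 x| ≤ 2 * a * (s2 - s1) := by
  have ha : 0 ≤ a := (abs_nonneg _).trans (hga 0)
  rw [aux_cocycle J g hgc a hga h hh β τ u x hm s1 s2 h1 h2]
  have hb := aux_bound J g h β τ a hga u s1 h1 x
  have hd := aux_decay (nonlin J g h β u x) a s2 s1 h2 fun r _ => hga _
  have he : 1 - Real.exp (-(s2 - s1)) ≤ s2 - s1 := by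
    have := Real.add_one_le_exp (-(s2 - s1)); linarith
  have he0 : 0 ≤ 1 - Real.exp (-(s2 - s1)) := by
    have : Real.exp (-(s2 - s1)) ≤ 1 := Real.exp_le_one_iff.2 (by linarith)
    linarith
  set I := ∫ r in s1..s2, Real.exp (-(s2 - r)) * nonlin J g h β u x r
  set V := vpart J g h β τ u s1 x
  set e := Real.exp (-(s2 - s1))
  have h3 : e * V + I - V = -((1 - e) * V) + I := by ring
  rw [h3]
  refine (abs_add_le _ _).trans ?_
  rw [abs_neg, abs_mul, abs_of_nonneg he0]
  have h4 : (1 - e) * |V| ≤ (1 - e) * a := mul_le_mul_of_nonneg_left hb he0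
  have h5 : (1 - e) * a ≤ (s2 - s1) * a := mul_le_mul_of_nonneg_right he ha
  linarith

theorem aux_diag {P : Type*} [TopologicalSpace P] [TopologicalSpace.SeparableSpace P] [Nonempty P]
    (V : ℕ → P → ℝ) (a : ℝ) (hV : ∀ n p, |V n p| ≤ a)
    (hH : ∀ p, ∀ e > 0, ∃ O ∈ 𝓝 p, ∀ d ∈ O, ∀ᶠ n in atTop, |V n p - V n d| ≤ e) :
    ∃ φ : ℕ → ℕ, StrictMono φ ∧ ∃ v : P → ℝ, ∀ p, Tendsto (fun n => V (φ n) p) atTop (𝓝 (v p)) := by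
  let d := TopologicalSpace.denseSeq P
  have hcomp : IsCompact (univ.pi fun _ : ℕ => Icc (-a) a) :=
    isCompact_univ_pi fun _ => isCompact_Icc
  obtain ⟨z, -, φ, hφ, hz⟩ := hcomp.isSeqCompact (x := fun n k => V n (d k))
    (fun n k _ => abs_le.1 (hV n (d k)))
  rw [tendsto_pi_nhds] at hz
  refine ⟨φ, hφ, ?_⟩
  have hC : ∀ p, ∃ l, Tendsto (fun n => V (φ n) p) atTop (𝓝 l) := by
    intro p
    apply cauchySeq_tendsto_of_complete
    rw [Metric.cauchySeq_iff']
    intro e he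
    obtain ⟨O, hO, hOd⟩ := hH p (e / 4) (by linarith)
    obtain ⟨k, hk⟩ := (TopologicalSpace.denseRange_denseSeq P).exists_mem_open
      isOpen_interior ⟨p, mem_interior_iff_mem_nhds.2 hO⟩
    have h1 := hφ.tendsto_atTop.eventually (hOd (d k) (interior_subset hk))
    have h2 := Metric.cauchySeq_iff'.1 (hz k).cauchySeq (e / 4) (by linarith)
    obtain ⟨n1, hn1⟩ := eventually_atTop.1 h1
    obtain ⟨n2, hn2⟩ := h2
    refine ⟨max n1 n2, fun n hn => ?_⟩
    have a1 := hn1 n ((le_max_left _ _).trans hn)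
    have a2 := hn1 (max n1 n2) (le_max_left _ _)
    have a3 := hn2 n ((le_max_right _ _).trans hn)
    have a4 := hn2 (max n1 n2) (le_max_right _ _)
    simp only [Function.comp, Real.dist_eq] at a3 a4 ⊢
    rw [abs_le] at a1 a2
    rw [abs_lt] at *
    constructor <;> linarith [a1.1, a1.2, a2.1, a2.2, a3.1, a3.2, a4.1, a4.2]
  choose v hv using hC
  exact ⟨v, hv⟩

theorem aux_conv {N : ℕ} (q : ℝ) (hq : 1 ≤ q)
    (ρ : Euc N → ℝ) (hρc : Continuous ρ) (hρpos : ∀ x, 0 < ρ x)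
    (J : Euc N → ℝ) (hJc : Continuous J) (CJ : ℝ) (hCJ : ∀ x, |J x| ≤ CJ)
    (hJsupp : ∀ x : Euc N, 1 < ‖x‖ → J x = 0)
    (a : ℝ) (ha : 0 ≤ a) (x : Euc N) :
    ∃ M ≥ 0, ∀ uτ w : Euc N → ℝ, MemWLp q ρ uτ → wnorm q ρ uτ ≤ a + 1 →
      AEStronglyMeasurable w volume → (∀ y, |w y| ≤ |uτ y| + a) →
      Integrable (fun y => J (x - y) * w y) ∧ |conv J w x| ≤ CJ * M ∧
      ∀ η, ∀ x', dist x' x ≤ 1 → (∀ y, |J (x - y) - J (x' - y)| ≤ η) →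
        |conv J w x - conv J w x'| ≤ η * M := by
  obtain ⟨m, hm, hloc⟩ := aux_loc q hq ρ hρc hρpos x 2
  have hk0 : ∀ x', dist x' x ≤ 1 → ∀ y, y ∉ Metric.closedBall x 2 → J (x' - y) = 0 := by
    intro x' hx' y hy
    apply hJsupp
    rw [Metric.mem_closedBall, not_le] at hy
    rw [← dist_eq_norm, dist_comm]
    have := dist_triangle y x' x
    linarith
  have hCJ0 : 0 ≤ CJ := (abs_nonneg _).trans (hCJ 0)
  have hI1 : IntegrableOn (fun _ : Euc N => (1:ℝ)) (Metric.closedBall x 2) :=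
    integrableOn_const measure_closedBall_lt_top.ne
  have hI2 : IntegrableOn (fun _ : Euc N => a) (Metric.closedBall x 2) :=
    integrableOn_const measure_closedBall_lt_top.ne
  refine ⟨((∫ y in Metric.closedBall x 2, (1:ℝ)) + m * (a + 1) ^ q) +
    ∫ y in Metric.closedBall x 2, a, ?_, ?_⟩
  · have : 0 ≤ ∫ y in Metric.closedBall x 2, (1:ℝ) := integral_nonneg fun _ => zero_le_one
    have : 0 ≤ ∫ y in Metric.closedBall x 2, a := integral_nonneg fun _ => ha
    positivity
  intro uτ w huτ hn hw hwb
  have hbi := (hloc uτ huτ).1.abs.add hI2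
  have hwi : IntegrableOn w (Metric.closedBall x 2) :=
    Integrable.mono' hbi hw.restrict (Eventually.of_forall fun y => by simpa using hwb y)
  have hwM : ∫ y in Metric.closedBall x 2, |w y| ≤
      ((∫ y in Metric.closedBall x 2, (1:ℝ)) + m * (a + 1) ^ q) +
        ∫ y in Metric.closedBall x 2, a := by
    calc ∫ y in Metric.closedBall x 2, |w y|
        ≤ ∫ y in Metric.closedBall x 2, (|uτ y| + a) := integral_mono hwi.abs hbi hwb
      _ = (∫ y in Metric.closedBall x 2, |uτ y|) + ∫ y in Metric.closedBall x 2, a :=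
          integral_add (hloc uτ huτ).1.abs hI2
      _ ≤ _ := by
          gcongr
          refine (hloc uτ huτ).2.trans ?_
          gcongr
          exact (aux_wnorm q hq ρ hρpos (a + 1) (by linarith) uτ).1 hn
  have hA := aux_kernel (fun y => J (x - y)) w x 2 CJ (by fun_prop) (fun y => hCJ _)
    (hk0 x (by simp)) hwi
  refine ⟨hA.1, hA.2.trans (by gcongr), ?_⟩
  intro η x' hx' hη
  have hη0 : 0 ≤ η := (abs_nonneg _).trans (hη 0)
  have hB := aux_kernel (fun y => J (x' - y)) w x 2 CJ (by fun_prop) (fun y => hCJ _)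
    (hk0 x' hx') hwi
  have hC := aux_kernel (fun y => J (x - y) - J (x' - y)) w x 2 η (by fun_prop) hη
    (fun y hy => by rw [hk0 x (by simp) y hy, hk0 x' hx' y hy, sub_zero]) hwi
  have : conv J w x - conv J w x' = ∫ y, (J (x - y) - J (x' - y)) * w y := by
    unfold conv
    rw [← integral_sub hA.1 hB.1]
    simp only [sub_mul]
  rw [this]
  exact hC.2.trans (by gcongr)

theorem aux_core {N : ℕ} (q : ℝ) (hq : 1 ≤ q)
    (ρ : Euc N → ℝ) (hρc : Continuous ρ) (hρpos : ∀ x, 0 < ρ x)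
    (J : Euc N → ℝ) (hJc : Continuous J) (hJsupp : ∀ x : Euc N, 1 < ‖x‖ → J x = 0)
    (g : ℝ → ℝ) (hgc : Continuous g) (a : ℝ) (hga : ∀ s, |g s| ≤ a)
    (ℓg : ℝ) (hgLip : ∀ s₁ s₂, |g s₁ - g s₂| ≤ ℓg * |s₁ - s₂|)
    (h : ℕ → ℝ → ℝ) (hh : ∀ n, Continuous (h n)) (h0 : ℝ → ℝ)
    (hh0 : ∀ r, Tendsto (fun n => h n r) atTop (𝓝 (h0 r)))
    (β : ℝ) (τ : ℕ → ℝ) (hτ : Tendsto τ atTop atBot)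
    (uτ : ℕ → Euc N → ℝ) (u : ℕ → ℝ → Euc N → ℝ) (huτ : ∀ n, MemWLp q ρ (uτ n))
    (hun : ∀ n, wnorm q ρ (uτ n) ≤ a + 1)
    (hu : ∀ n, ∀ t' ≥ τ n, MemWLp q ρ (u n t'))
    (hsol : ∀ n, IsSolution J g (fun s _ => h n s) β (τ n) (uτ n) (u n)) :
    ∃ φ : ℕ → ℕ, StrictMono φ ∧ ∃ v : ℝ → Euc N → ℝ,
      (∀ s x, Tendsto (fun n => vpart J g (h (φ n)) β (τ (φ n)) (u (φ n)) s x) atTop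
        (𝓝 (v s x))) ∧
      (∀ s x, |v s x| ≤ a) ∧ (∀ s, AEStronglyMeasurable (v s) volume) ∧
      ∀ T, IsSolution J g (fun s _ => h0 s) β T (v T) v := by
  have ha : 0 ≤ a := (abs_nonneg _).trans (hga 0)
  have hJcs : HasCompactSupport J := by
    refine HasCompactSupport.intro (isCompact_closedBall (0 : Euc N) 1) fun x hx => ?_
    apply hJsupp
    simpa using hx
  obtain ⟨CJ, hCJ'⟩ := hJcs.exists_bound_of_continuous hJc
  have hCJ : ∀ x, |J x| ≤ CJ := hCJ'
  have hJuc : UniformContinuous J := hJcs.uniformContinuous_of_continuous hJc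
  have hsol' : ∀ n, ∀ t ≥ τ n, ∀ x, u n t x =
      Real.exp (-(t - τ n)) * uτ n x + vpart J g (h n) β (τ n) (u n) t x := hsol
  have hexp1 : ∀ n, ∀ t ≥ τ n, Real.exp (-(t - τ n)) ≤ 1 := fun n t ht =>
    Real.exp_le_one_iff.2 (by linarith)
  have hub : ∀ n, ∀ t ≥ τ n, ∀ y, |u n t y| ≤ |uτ n y| + a := by
    intro n t ht y
    rw [hsol' n t ht y]
    refine (abs_add_le _ _).trans (add_le_add ?_ (aux_bound J g (h n) β (τ n) a hga (u n) t ht y))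
    rw [abs_mul, Real.abs_exp]
    exact mul_le_of_le_one_left (abs_nonneg _) (hexp1 n t ht)
  have hmeas : ∀ n x, Measurable (indicator (Ioi (τ n)) fun s => conv J (u n s) x) := fun n x =>
    aux_meas q hq ρ hρc hρpos J hJc CJ hCJ hJsupp g a hga (h n) β (τ n) (uτ n) (u n) (huτ n)
      (hu n) (hsol n) x
  have hVm : ∀ n, ∀ t ≥ τ n, AEStronglyMeasurable (vpart J g (h n) β (τ n) (u n) t) volume := by
    intro n t ht
    have : vpart J g (h n) β (τ n) (u n) t =
        fun x => u n t x - Real.exp (-(t - τ n)) * uτ n x := by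
      ext x
      rw [hsol' n t ht x]
      ring
    rw [this]
    exact (hu n t ht).1.sub ((huτ n).1.const_mul _)
  have hxeq : ∀ x, ∃ M ≥ 0, ∀ η, ∀ x', dist x' x ≤ 1 → (∀ y, |J (x - y) - J (x' - y)| ≤ η) →
      ∀ n, ∀ t ≥ τ n, |vpart J g (h n) β (τ n) (u n) t x - vpart J g (h n) β (τ n) (u n) t x'|
        ≤ |ℓg| * |β| * (η * M) := by
    intro x
    obtain ⟨M, hM, hc⟩ := aux_conv q hq ρ hρc hρpos J hJc CJ hCJ hJsupp a ha x
    refine ⟨M, hM, fun η x' hx' hη n t ht => ?_⟩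
    have hη0 : 0 ≤ η := (abs_nonneg _).trans (hη 0)
    unfold vpart
    rw [← intervalIntegral.integral_sub
      (aux_ii J g hgc a hga (h n) (hh n) β (τ n) (u n) x (hmeas n x) t (τ n) t le_rfl ht)
      (aux_ii J g hgc a hga (h n) (hh n) β (τ n) (u n) x' (hmeas n x') t (τ n) t le_rfl ht)]
    simp only [← mul_sub]
    refine (aux_decay _ (|ℓg| * |β| * (η * M)) t (τ n) ht ?_).trans ?_
    · intro r hr
      unfold nonlin
      refine (hgLip _ _).trans ?_
      have h1 := (hc (uτ n) (u n r) (huτ n) (hun n) (hu n r hr.1.le).1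
        (hub n r hr.1.le)).2.2 η x' hx' hη
      have h2 : β * conv J (u n r) x + β * h n r - (β * conv J (u n r) x' + β * h n r) =
        β * (conv J (u n r) x - conv J (u n r) x') := by ring
      rw [h2, abs_mul, mul_assoc]
      exact mul_le_mul (le_abs_self _) (mul_le_mul_of_nonneg_left h1 (abs_nonneg _))
        (by positivity) (abs_nonneg _)
    · have := Real.exp_pos (-(t - τ n))
      refine mul_le_of_le_one_left (by positivity) (by linarith)
  obtain ⟨φ, hφ, v', hv'⟩ := aux_diag (P := ℝ × Euc N)
    (fun n p => if τ n ≤ p.1 then vpart J g (h n) β (τ n) (u n) p.1 p.2 else 0) a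
    (by
      intro n p
      split_ifs with hc
      · exact aux_bound J g (h n) β (τ n) a hga (u n) p.1 hc p.2
      · simpa using ha)
    (by
      rintro ⟨s, x⟩ e he
      obtain ⟨M, hM, hMx⟩ := hxeq x
      set η := e / 2 / (|ℓg| * |β| * M + 1) with hηd
      have hD : 0 < |ℓg| * |β| * M + 1 := by positivity
      have hη : 0 < η := by positivity
      obtain ⟨d1, hd1, hJd⟩ := Metric.uniformContinuous_iff.1 hJuc η hη
      set d2 := e / 2 / (2 * a + 1) with hd2d
      have hd2 : 0 < d2 := by positivity
      refine ⟨Metric.ball s d2 ×ˢ Metric.ball x (min d1 1),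
        prod_mem_nhds (Metric.ball_mem_nhds _ hd2) (Metric.ball_mem_nhds _ (by positivity)), ?_⟩
      rintro ⟨s', x'⟩ ⟨hs', hx'⟩
      simp only [Metric.mem_ball] at hs' hx'
      have hx1 : dist x' x < d1 := lt_of_lt_of_le hx' (min_le_left _ _)
      have hx2 : dist x' x ≤ 1 := (lt_of_lt_of_le hx' (min_le_right _ _)).le
      filter_upwards [hτ.eventually_le_atBot s, hτ.eventually_le_atBot s'] with n hn1 hn2
      simp only [hn1, hn2, if_true]
      have e1 := hMx η x' hx2 (fun y => by
        have := hJd (a := x - y) (b := x' - y) (by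
          rw [dist_sub_right, dist_comm]; exact hx1)
        rw [Real.dist_eq] at this
        exact this.le) n s hn1
      have e2 : |vpart J g (h n) β (τ n) (u n) s x' - vpart J g (h n) β (τ n) (u n) s' x'| ≤
          2 * a * |s - s'| := by
        rcases le_total s s' with hss | hss
        · rw [abs_sub_comm, abs_sub_comm s, abs_of_nonneg (sub_nonneg.2 hss)]
          exact aux_tlip J g hgc a hga (h n) (hh n) β (τ n) (u n) x' (hmeas n x') s s' hn1 hss
        · rw [abs_of_nonneg (sub_nonneg.2 hss)]
          exact aux_tlip J g hgc a hga (h n) (hh n) β (τ n) (u n) x' (hmeas n x') s' s hn2 hss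
      have e3 : |ℓg| * |β| * (η * M) ≤ e / 2 := by
        have : η * (|ℓg| * |β| * M + 1) = e / 2 := div_mul_cancel₀ _ hD.ne'
        nlinarith
      have e4 : 2 * a * |s - s'| ≤ e / 2 := by
        have h1 : d2 * (2 * a + 1) = e / 2 := div_mul_cancel₀ _ (by positivity)
        have h2 : |s - s'| ≤ d2 := by
          rw [abs_sub_comm, ← Real.dist_eq]; exact hs'.le
        have h3 : 2 * a * |s - s'| ≤ 2 * a * d2 := mul_le_mul_of_nonneg_left h2 (by positivity)
        nlinarith
      refine (abs_sub_le _ (vpart J g (h n) β (τ n) (u n) s x') _).trans ?_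
      linarith)
  have hτφ : Tendsto (fun n => τ (φ n)) atTop atBot := hτ.comp hφ.tendsto_atTop
  have hlim : ∀ s x, Tendsto (fun n => vpart J g (h (φ n)) β (τ (φ n)) (u (φ n)) s x) atTop
        (𝓝 (v' (s, x))) := by
    intro s x
    refine (hv' (s, x)).congr' ?_
    filter_upwards [hτφ.eventually_le_atBot s] with n hn
    simp [hn]
  have hvb : ∀ s x, |v' (s, x)| ≤ a := by
    intro s x
    refine le_of_tendsto (hlim s x).abs ?_
    filter_upwards [hτφ.eventually_le_atBot s] with n hn
    exact aux_bound _ _ _ _ _ _ hga _ _ hn _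
  refine ⟨φ, hφ, fun s x => v' (s, x), hlim, hvb, ?_, ?_⟩
  · intro s
    obtain ⟨n0, hn0⟩ := eventually_atTop.1 (hτφ.eventually_le_atBot s)
    refine aestronglyMeasurable_of_tendsto_ae atTop
      (f := fun n => vpart J g (h (φ (n + n0))) β (τ (φ (n + n0))) (u (φ (n + n0))) s)
      (fun n => hVm _ s (hn0 _ (by omega))) (Eventually.of_forall fun x => ?_)
    exact (hlim s x).comp (tendsto_add_atTop_nat n0)
  have hexp0 : ∀ s, Tendsto (fun n => Real.exp (-(s - τ (φ n)))) atTop (𝓝 0) := by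
    intro s
    refine Real.tendsto_exp_atBot.comp ?_
    have : (fun n => -(s - τ (φ n))) = fun n => -s + τ (φ n) := by ext n; ring
    rw [this]
    exact tendsto_atBot_add_const_left _ _ hτφ
  have hconvlim : ∀ s x, Tendsto (fun n => conv J (u (φ n) s) x) atTop
      (𝓝 (conv J (fun y => v' (s, y)) x)) := by
    intro s x
    obtain ⟨M, hM, hc⟩ := aux_conv q hq ρ hρc hρpos J hJc CJ hCJ hJsupp a ha x
    have h1 : Tendsto (fun n => Real.exp (-(s - τ (φ n))) * conv J (uτ (φ n)) x) atTop (𝓝 0) := by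
      refine squeeze_zero_norm (a := fun n => Real.exp (-(s - τ (φ n))) * (CJ * M)) ?_ ?_
      · intro n
        rw [norm_mul, Real.norm_eq_abs, Real.norm_eq_abs, Real.abs_exp]
        refine mul_le_mul_of_nonneg_left ?_ (Real.exp_pos _).le
        exact (hc _ _ (huτ _) (hun _) (huτ _).1 fun y => by linarith).2.1
      · simpa using (hexp0 s).mul_const (CJ * M)
    have h2 : Tendsto (fun n => conv J (vpart J g (h (φ n)) β (τ (φ n)) (u (φ n)) s) x) atTop
        (𝓝 (conv J (fun y => v' (s, y)) x)) := by
      unfold conv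
      have hker := (aux_kernel (fun y => |J (x - y)|) (fun y => a) x 1 CJ (by fun_prop)
        (fun y => by simpa using hCJ _) (fun y hy => by
          rw [abs_eq_zero]
          apply hJsupp
          rw [Metric.mem_closedBall, not_le, dist_comm, dist_eq_norm] at hy
          exact hy) (integrableOn_const measure_closedBall_lt_top.ne)).1
      refine tendsto_integral_filter_of_dominated_convergence _ ?_ ?_ hker ?_
      · filter_upwards [hτφ.eventually_le_atBot s] with n hn
        exact (Continuous.aestronglyMeasurable (by fun_prop)).mul (hVm _ s hn)
      · filter_upwards [hτφ.eventually_le_atBot s] with n hn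
        refine Eventually.of_forall fun y => ?_
        rw [norm_mul, Real.norm_eq_abs, Real.norm_eq_abs]
        exact mul_le_mul_of_nonneg_left (aux_bound _ _ _ _ _ _ hga _ _ hn _) (abs_nonneg _)
      · exact Eventually.of_forall fun y => (hlim s y).const_mul _
    have h3 := h1.add h2
    rw [zero_add] at h3
    refine h3.congr' ?_
    filter_upwards [hτφ.eventually_le_atBot s] with n hn
    have i1 := (hc _ _ (huτ (φ n)) (hun _) (huτ _).1 fun y => by linarith).1
    have i2 := (hc _ (vpart J g (h (φ n)) β (τ (φ n)) (u (φ n)) s) (huτ (φ n)) (hun _)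
      (hVm _ s hn) fun y => (aux_bound _ _ _ _ _ _ hga _ _ hn _).trans
        (by linarith [abs_nonneg (uτ (φ n) y)])).1
    unfold conv
    rw [← integral_const_mul, ← integral_add (i1.const_mul _) i2]
    congr 1
    ext y
    rw [hsol' _ s hn y]
    ring
  intro T s hs x
  have hRHS : Tendsto (fun n => Real.exp (-(s - T)) *
      vpart J g (h (φ n)) β (τ (φ n)) (u (φ n)) T x +
      ∫ r in T..s, Real.exp (-(s - r)) * nonlin J g (h (φ n)) β (u (φ n)) x r) atTop
      (𝓝 (Real.exp (-(s - T)) * v' (T, x) + ∫ r in T..s, Real.exp (-(s - r)) *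
        g (β * conv J (fun y => v' (r, y)) x + β * h0 r))) := by
    refine ((hlim T x).const_mul _).add ?_
    refine intervalIntegral.tendsto_integral_filter_of_dominated_convergence
      (fun r => Real.exp (-(s - r)) * a) ?_ ?_ ?_ ?_
    · filter_upwards [hτφ.eventually_le_atBot T] with n hn
      rw [uIoc_of_le hs]
      exact ((intervalIntegrable_iff_integrableOn_Ioc_of_le hs).1
        (aux_ii J g hgc a hga _ (hh _) β _ _ x (hmeas _ x) s T s hn hs)).aestronglyMeasurable
    · refine Eventually.of_forall fun n => Eventually.of_forall fun r _ => ?_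
      rw [norm_mul, Real.norm_eq_abs, Real.norm_eq_abs, Real.abs_exp]
      exact mul_le_mul_of_nonneg_left (hga _) (Real.exp_pos _).le
    · exact Continuous.intervalIntegrable (by fun_prop) _ _
    · refine Eventually.of_forall fun r _ => Tendsto.const_mul _ ?_
      refine (hgc.tendsto _).comp ?_
      exact ((hconvlim r x).const_mul β).add (((hh0 r).comp hφ.tendsto_atTop).const_mul β)
  refine tendsto_nhds_unique (hlim s x) (hRHS.congr' ?_)
  filter_upwards [hτφ.eventually_le_atBot T] with n hn
  exact (aux_cocycle J g hgc a hga _ (hh _) β _ _ x (hmeas _ x) T s hn hs).symm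

theorem aux_memLp {N : ℕ} (p : ℝ≥0∞) [Fact (1 ≤ p)] (hp : p ≠ ⊤)
    (ρ : Euc N → ℝ) (hρc : Continuous ρ) (hρpos : ∀ x, 0 < ρ x) (u : Euc N → ℝ)
    (hu : MemWLp p.toReal ρ u) :
    MemLp u p (wMeasure ρ) ∧ (eLpNorm u p (wMeasure ρ)).toReal = wnorm p.toReal ρ u := by
  have hp1 : (1 : ℝ≥0∞) ≤ p := Fact.out
  have hp0 : p ≠ 0 := (zero_lt_one.trans_le hp1).ne'
  have hac : wMeasure ρ ≪ volume := withDensity_absolutelyContinuous _ _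
  have hnn : ∀ y, 0 ≤ ρ y * |u y| ^ p.toReal := fun y => by
    have := (hρpos y).le
    positivity
  have h1 : ∫⁻ y, ‖u y‖ₑ ^ p.toReal ∂(wMeasure ρ) =
      ENNReal.ofReal (∫ y, ρ y * |u y| ^ p.toReal) := by
    rw [ofReal_integral_eq_lintegral_ofReal hu.2 (Eventually.of_forall hnn)]
    unfold wMeasure
    rw [lintegral_withDensity_eq_lintegral_mul₀ (by fun_prop)
      (hu.1.enorm.pow_const _)]
    refine lintegral_congr fun y => ?_
    simp only [Pi.mul_apply]
    rw [ENNReal.ofReal_mul (hρpos y).le, Real.enorm_eq_ofReal_abs,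
      ENNReal.ofReal_rpow_of_nonneg (abs_nonneg _) ENNReal.toReal_nonneg]
  have h2 : eLpNorm u p (wMeasure ρ) = ENNReal.ofReal (wnorm p.toReal ρ u) := by
    rw [eLpNorm_eq_lintegral_rpow_enorm_toReal hp0 hp, h1]
    unfold wnorm
    rw [ENNReal.ofReal_rpow_of_nonneg (integral_nonneg hnn) (by positivity)]
  refine ⟨⟨hu.1.mono_ac hac, by rw [h2]; exact ENNReal.ofReal_lt_top⟩, ?_⟩
  rw [h2, ENNReal.toReal_ofReal]
  exact Real.rpow_nonneg (integral_nonneg hnn) _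
theorem stmt16 {N : ℕ} (p : ℝ≥0∞) [Fact (1 ≤ p)] (hp : p ≠ ⊤)
    (ρ : Euc N → ℝ) (hρc : Continuous ρ) (hρpos : ∀ x, 0 < ρ x) (hρ1 : ∫ x, ρ x = 1)
    (K : ℝ) (hK : 0 < K) (hKρ : ∀ y x : Euc N, ‖x - y‖ ≤ 1 → ρ x ≤ K * ρ y)
    (β : ℝ) (hβ : 0 < β)
    (J : Euc N → ℝ) (hJC1 : ContDiff ℝ 1 J) (hJnn : ∀ x, 0 ≤ J x)
    (hJeven : ∀ x, J (-x) = J x)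
    (hJsupp : ∀ x : Euc N, 1 < ‖x‖ → J x = 0) (hJ1 : ∫ x, J x = 1)
    (g : ℝ → ℝ) (hgC1 : ContDiff ℝ 1 g) (hg0 : g 0 = 0)
    (a : ℝ) (hga : ∀ s, |g s| ≤ a)
    (ℓg : ℝ) (hgLip : ∀ s₁ s₂, |g s₁ - g s₂| ≤ ℓg * |s₁ - s₂|)
    (k₁ : ℝ) (hg'Lip : ∀ s₁ s₂, |deriv g s₁ - deriv g s₂| ≤ k₁ * |s₁ - s₂|)
    (hstar : ℝ) (h : ℝ → ℝ → ℝ)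
    (hhreg : ∀ ε ∈ Icc (0 : ℝ) 1, Continuous (h ε) ∧ ∀ t, h ε t ∈ Ico (0 : ℝ) hstar)
    (hconv : ∀ δ > 0, ∃ ε₀ > 0, ∀ ε ∈ Ioc (0 : ℝ) ε₀, ∀ t, |h ε t - h 0 t| < δ)
    (t : ℝ) :
    ∀ δ > 0, ∃ ε₀ > 0, ∀ ε ∈ Ioc (0 : ℝ) ε₀,
      ∀ w ∈ attrSet p ρ J g (h ε) β (a + 1) t,
        Metric.infDist w (attrSet p ρ J g (h 0) β (a + 1) t) < δ := by

  have hgc : Continuous g := hgC1.continuous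
  have hJc : Continuous J := hJC1.continuous
  have ha : 0 ≤ a := (abs_nonneg _).trans (hga 0)
  have hp1 : (1 : ℝ≥0∞) ≤ p := Fact.out
  have hq : 1 ≤ p.toReal := by
    simpa using (ENNReal.toReal_le_toReal ENNReal.one_ne_top hp).2 hp1
  have hq0 : 0 < p.toReal := by linarith
  have hρi : Integrable ρ := by
    by_contra hc
    rw [integral_undef hc] at hρ1
    exact zero_ne_one hρ1
  have hac : wMeasure ρ ≪ volume := withDensity_absolutelyContinuous _ _
  intro δ hδ
  by_contra! hcon
  have hseq : ∀ n : ℕ, ∃ ε ∈ Ioc (0:ℝ) (1 / ((n:ℝ) + 1)),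
      ∃ w ∈ attrSet p ρ J g (h ε) β (a + 1) t,
        δ ≤ Metric.infDist w (attrSet p ρ J g (h 0) β (a + 1) t) :=
    fun n => hcon _ (by positivity)
  choose ε hε w hw hwδ using hseq
  have hex : ∀ n : ℕ, ∃ w' : Lp ℝ p (wMeasure ρ), dist (w n) w' < 1 / ((n:ℝ) + 1) ∧
      ∃ τ ≤ min t (-(n:ℝ)), w' ∈ procSet p ρ J g (h (ε n)) β (a + 1) t τ := by
    intro n
    have h1 := mem_iInter₂.1 (hw n) (min t (-(n:ℝ))) (mem_Iic.2 (min_le_left _ _))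
    obtain ⟨w', hw', hd⟩ := Metric.mem_closure_iff.1 h1 (1 / ((n:ℝ) + 1)) (by positivity)
    obtain ⟨τ, hτ, hwτ⟩ := mem_iUnion₂.1 hw'
    exact ⟨w', hd, τ, hτ, hwτ⟩
  choose w' hd τ hτ u uτ huτ hun hu hsol hwu using hex
  have hτt : ∀ n, τ n ≤ t := fun n => (hτ n).trans (min_le_left _ _)
  have hτl : Tendsto τ atTop atBot :=
    tendsto_atBot_mono (fun n => (hτ n).trans (min_le_right _ _))
      (tendsto_neg_atTop_atBot.comp tendsto_natCast_atTop_atTop)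
  have hε1 : ∀ n, ε n ∈ Icc (0:ℝ) 1 := by
    intro n
    refine ⟨(hε n).1.le, (hε n).2.trans ?_⟩
    rw [div_le_one (by positivity)]
    have : (0:ℝ) ≤ n := Nat.cast_nonneg n
    linarith
  have hhlim : ∀ r, Tendsto (fun n => h (ε n) r) atTop (𝓝 (h 0 r)) := by
    intro r
    rw [Metric.tendsto_nhds]
    intro e he
    obtain ⟨ε₀, hε₀, hc⟩ := hconv e he
    have := (tendsto_one_div_add_atTop_nhds_zero_nat (𝕜 := ℝ)).eventually (gt_mem_nhds hε₀)
    filter_upwards [this] with n hn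
    rw [Real.dist_eq]
    exact hc (ε n) ⟨(hε n).1, (hε n).2.trans hn.le⟩ r
  obtain ⟨φ, hφ, v, hlim, hvb, hvm, hvsol⟩ := aux_core p.toReal hq ρ hρc hρpos J hJc hJsupp g hgc
    a hga ℓg hgLip (fun n => h (ε n)) (fun n => (hhreg _ (hε1 n)).1) (h 0) hhlim β τ hτl uτ u huτ
    hun hu hsol
  -- bounded functions belong to the weighted space
  have hbdd : ∀ (f : Euc N → ℝ) (b : ℝ), AEStronglyMeasurable f volume → (∀ x, |f x| ≤ b) →
      MemWLp p.toReal ρ f := by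
    intro f b hf hb
    refine ⟨hf, Integrable.mono' (hρi.mul_const (b ^ p.toReal)) ?_ ?_⟩
    · exact hρc.aestronglyMeasurable.mul
        ((hf.norm.aemeasurable.pow_const p.toReal).aestronglyMeasurable)
    · refine Eventually.of_forall fun x => ?_
      have h1 : 0 ≤ |f x| ^ p.toReal := by positivity
      rw [norm_mul, Real.norm_eq_abs, Real.norm_eq_abs, abs_of_pos (hρpos x), abs_of_nonneg h1]
      exact mul_le_mul_of_nonneg_left
        (Real.rpow_le_rpow (abs_nonneg _) (hb x) hq0.le) (hρpos x).le
  have hvW : ∀ s, MemWLp p.toReal ρ (v s) := fun s => hbdd _ a (hvm s) (hvb s)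
  have hvn : ∀ s, wnorm p.toReal ρ (v s) ≤ a + 1 := by
    intro s
    rw [aux_wnorm p.toReal hq ρ hρpos (a + 1) (by linarith)]
    calc ∫ y, ρ y * |v s y| ^ p.toReal ≤ ∫ y, ρ y * (a + 1) ^ p.toReal := by
          refine integral_mono (hvW s).2 (hρi.mul_const _) fun y => ?_
          exact mul_le_mul_of_nonneg_left (Real.rpow_le_rpow (abs_nonneg _)
            ((hvb s y).trans (by linarith)) hq0.le) (hρpos y).le
      _ = (a + 1) ^ p.toReal := by rw [integral_mul_const, hρ1, one_mul]
  have hvL := (aux_memLp p hp ρ hρc hρpos (v t) (hvW t)).1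
  set w0 : Lp ℝ p (wMeasure ρ) := hvL.toLp (v t) with hw0
  have hmem : w0 ∈ attrSet p ρ J g (h 0) β (a + 1) t := by
    refine mem_iInter₂.2 fun s _ => subset_closure (mem_iUnion₂.2 ⟨s, le_refl s, ?_⟩)
    exact ⟨v, v s, hvW s, hvn s, fun t' _ => hvW t', hvsol s, hvL.coeFn_toLp⟩
  -- convergence of the approximants
  have hVW : ∀ n, MemWLp p.toReal ρ
      (fun x => vpart J g (h (ε (φ n))) β (τ (φ n)) (u (φ n)) t x - v t x) := by
    intro n
    refine hbdd _ (a + a) ?_ ?_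
    · have h1 : (fun x => vpart J g (h (ε (φ n))) β (τ (φ n)) (u (φ n)) t x - v t x) =
          fun x => u (φ n) t x - Real.exp (-(t - τ (φ n))) * uτ (φ n) x - v t x := by
        ext x
        have : u (φ n) t x = Real.exp (-(t - τ (φ n))) * uτ (φ n) x +
          vpart J g (h (ε (φ n))) β (τ (φ n)) (u (φ n)) t x := hsol (φ n) t (hτt _) x
        rw [this]
        ring
      rw [h1]
      exact ((hu (φ n) t (hτt _)).1.sub ((huτ (φ n)).1.const_mul _)).sub (hvm t)
    · intro x
      exact (abs_sub _ _).trans (add_le_add (aux_bound _ _ _ _ _ _ hga _ _ (hτt _) _) (hvb t x))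
  have hint : Tendsto (fun n => wnorm p.toReal ρ
      (fun x => vpart J g (h (ε (φ n))) β (τ (φ n)) (u (φ n)) t x - v t x)) atTop (𝓝 0) := by
    have h1 : Tendsto (fun n => ∫ x, ρ x *
        |vpart J g (h (ε (φ n))) β (τ (φ n)) (u (φ n)) t x - v t x| ^ p.toReal) atTop
        (𝓝 (∫ x : Euc N, (0:ℝ))) := by
      refine tendsto_integral_of_dominated_convergence (fun x => ρ x * (a + a) ^ p.toReal)
        (fun n => (hVW n).2.aestronglyMeasurable) (hρi.mul_const _) ?_ ?_
      · intro n
        refine Eventually.of_forall fun x => ?_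
        have h1 : 0 ≤ |vpart J g (h (ε (φ n))) β (τ (φ n)) (u (φ n)) t x - v t x| ^ p.toReal := by
          positivity
        rw [norm_mul, Real.norm_eq_abs, Real.norm_eq_abs, abs_of_pos (hρpos x), abs_of_nonneg h1]
        refine mul_le_mul_of_nonneg_left
          (Real.rpow_le_rpow (abs_nonneg _) ?_ hq0.le) (hρpos x).le
        exact (abs_sub _ _).trans (add_le_add (aux_bound _ _ _ _ _ _ hga _ _ (hτt _) _) (hvb t x))
      · refine Eventually.of_forall fun x => ?_
        have h2 := ((((hlim t x).sub_const (v t x)).abs).rpow_const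
          (p := p.toReal) (Or.inr hq0.le)).const_mul (ρ x)
        simpa [Real.zero_rpow hq0.ne'] using h2
    rw [integral_zero] at h1
    have h2 := h1.rpow_const (p := 1 / p.toReal) (Or.inr (by positivity))
    rw [Real.zero_rpow (by positivity)] at h2
    exact h2
  have hexp0 : Tendsto (fun n => Real.exp (-(t - τ (φ n))) * (a + 1)) atTop (𝓝 0) := by
    have h1 : Tendsto (fun n => Real.exp (-(t - τ (φ n)))) atTop (𝓝 0) := by
      refine Real.tendsto_exp_atBot.comp ?_
      have : (fun n => -(t - τ (φ n))) = fun n => -t + τ (φ n) := by ext n; ring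
      rw [this]
      exact tendsto_atBot_add_const_left _ _ (hτl.comp hφ.tendsto_atTop)
    simpa using h1.mul_const (a + 1)
  have hdist : ∀ n, dist (w' (φ n)) w0 ≤ Real.exp (-(t - τ (φ n))) * (a + 1) +
      wnorm p.toReal ρ
        (fun x => vpart J g (h (ε (φ n))) β (τ (φ n)) (u (φ n)) t x - v t x) := by
    intro n
    obtain ⟨hX, hXn⟩ := aux_memLp p hp ρ hρc hρpos _ (huτ (φ n))
    obtain ⟨hY, hYn⟩ := aux_memLp p hp ρ hρc hρpos _ (hVW n)
    have heq : w' (φ n) - w0 = Real.exp (-(t - τ (φ n))) • hX.toLp _ + hY.toLp _ := by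
      apply Lp.ext
      filter_upwards [hwu (φ n), hvL.coeFn_toLp, hX.coeFn_toLp, hY.coeFn_toLp,
        Lp.coeFn_sub (w' (φ n)) w0,
        Lp.coeFn_add (Real.exp (-(t - τ (φ n))) • hX.toLp _) (hY.toLp _),
        Lp.coeFn_smul (Real.exp (-(t - τ (φ n)))) (hX.toLp _)] with x e1 e2 e3 e4 e5 e6 e7
      rw [e5, e6, Pi.sub_apply, Pi.add_apply, e7, Pi.smul_apply, e1, hw0, e2, e3, e4]
      have : u (φ n) t x = Real.exp (-(t - τ (φ n))) * uτ (φ n) x +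
          vpart J g (h (ε (φ n))) β (τ (φ n)) (u (φ n)) t x := hsol (φ n) t (hτt _) x
      rw [this, smul_eq_mul]
      ring
    rw [dist_eq_norm, heq]
    refine (norm_add_le _ _).trans ?_
    rw [norm_smul, Lp.norm_toLp, Lp.norm_toLp, hXn, hYn, Real.norm_eq_abs, Real.abs_exp]
    have := mul_le_mul_of_nonneg_left (hun (φ n)) (Real.exp_pos (-(t - τ (φ n)))).le
    linarith
  have htot : Tendsto (fun n => 1 / ((φ n : ℝ) + 1) + (Real.exp (-(t - τ (φ n))) * (a + 1) +
      wnorm p.toReal ρ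
        (fun x => vpart J g (h (ε (φ n))) β (τ (φ n)) (u (φ n)) t x - v t x))) atTop (𝓝 0) := by
    simpa using ((tendsto_one_div_add_atTop_nhds_zero_nat (𝕜 := ℝ)).comp hφ.tendsto_atTop).add
      (hexp0.add hint)
  obtain ⟨n, hn⟩ := (htot.eventually (gt_mem_nhds hδ)).exists
  have h1 := hwδ (φ n)
  have h2 := Metric.infDist_le_dist_of_mem (x := w (φ n)) hmem
  have h3 := dist_triangle (w (φ n)) (w' (φ n)) w0
  have h4 := hd (φ n)
  have h5 := hdist n
  linarith
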